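/- arXiv:1012.4145 — 2 statements merged into one kernel-verified Lean document; each statement's English description precedes it below -/
import Mathlib

section
/- Let x ∈ ℂ with x ∉ {−1, −2, −3, …}. Then lim_{r→0⁺} (2π b(r)) · G_{b(r)}(Q(r) + b(r)·x) / (2πr)^{x+1} = (1 − e^{2πi x}) Γ(x+1), where Q(r) = b(r) + b(r)^{−1}. -/
open Complex Filter Topology

/-- ζ̄_b = exp(−πi/4 − (πi/12)(b² + b^{−2})). -/
noncomputable def zetaBar (b : ℂ) : ℂ :=
  Complex.exp (-(Real.pi * Complex.I) / 4 - (Real.pi * Complex.I) / 12 * (b ^ 2 + b⁻¹ ^ 2))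

/-- The quantum dilogarithm `G_b(x)`, defined for `Im(b²) > 0` by the infinite product
`ζ̄_b · ∏_{n=1}^∞ (1 − e^{2πi b⁻¹(x − n b⁻¹)}) / ∏_{n=0}^∞ (1 − e^{2πi b(x + n b)})`. -/
noncomputable def Gb (b x : ℂ) : ℂ :=
  zetaBar b *
      (∏' n : ℕ, (1 - Complex.exp (2 * Real.pi * Complex.I * b⁻¹ * (x - (n + 1) * b⁻¹)))) /
    (∏' n : ℕ, (1 - Complex.exp (2 * Real.pi * Complex.I * b * (x + n * b))))

/-- `b(r) = e^{iπ/4} √r`, so that `b(r)² = i r`. -/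
noncomputable def br (r : ℝ) : ℂ :=
  Complex.exp (Real.pi * Complex.I / 4) * (Real.sqrt r : ℂ)

/-!
Put `q = exp (2πi b²)` and `q' = exp (-2πi b⁻²)`. At `Q + b x` the two products defining `Gb`
are `(exp (2πi x); q')_∞` and `(q ^ (x + 1); q)_∞`, and the modular transformation of the Dedekind
eta function turns `zetaBar b` into `-i b (q; q)_∞ / (q'; q')_∞`. As `r → 0⁺` the symbols in `q'`
tend to `1 - exp (2πi x)` and `1`, while `q → 1⁻` and the symbols in `q` assemble into Jackson's
`Γ_q (x + 1)`. Finally `Γ_q → Γ`: for `1 ≤ re z` by dominated convergence in a `q`-analogue of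
Euler's product, and then for every `z` by the functional equation `Γ_q (z + 1) = [z]_q Γ_q (z)`.
-/

lemma exists_norm_dslope_sub_deriv_le {E : Type*} [NormedAddCommGroup E] [NormedSpace ℂ E]
    [CompleteSpace E] {f : ℂ → E} {c : ℂ} {U K : Set ℂ} (hU : U ∈ 𝓝 c)
    (hf : DifferentiableOn ℂ f U) (hK : IsCompact K) (hKU : K ⊆ U) :
    ∃ C, ∀ w ∈ K, ‖dslope f c w - deriv f c‖ ≤ C * ‖w - c‖ := by
  have hcont : ContinuousOn (dslope (dslope f c) c) U :=
    ((differentiableOn_dslope hU).2 ((differentiableOn_dslope hU).2 hf)).continuousOn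
  obtain ⟨C, hC⟩ := hK.exists_bound_of_continuousOn (hcont.mono hKU)
  refine ⟨C, fun w hw => ?_⟩
  rw [← dslope_same f c, ← sub_smul_dslope, norm_smul, mul_comm C]
  gcongr
  exact hC w hw

section QPochhammer

variable {𝕜 : Type*} [NormedField 𝕜]

/-- The infinite `q`-Pochhammer symbol `(a; q)_∞`. -/
noncomputable def qPochhammer (a q : 𝕜) : 𝕜 :=
  ∏' n : ℕ, (1 - a * q ^ n)

lemma qPochhammer_zero_right (a : 𝕜) : qPochhammer a 0 = 1 - a := by
  rw [qPochhammer, tprod_eq_mulSingle 0 fun n hn => by simp [hn]]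
  simp

lemma summable_norm_neg_mul_pow (a : 𝕜) {q : 𝕜} (hq : ‖q‖ < 1) :
    Summable fun n : ℕ => ‖-(a * q ^ n)‖ := by
  simpa only [norm_neg, norm_mul, norm_pow] using
    (summable_geometric_of_lt_one (norm_nonneg q) hq).mul_left ‖a‖

variable [CompleteSpace 𝕜]

lemma multipliable_one_sub_mul_pow (a : 𝕜) {q : 𝕜} (hq : ‖q‖ < 1) :
    Multipliable fun n : ℕ => 1 - a * q ^ n := by
  simpa only [sub_eq_add_neg] using
    multipliable_one_add_of_summable (summable_norm_neg_mul_pow a hq)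

lemma qPochhammer_eq_one_sub_mul (a : 𝕜) {q : 𝕜} (hq : ‖q‖ < 1) :
    qPochhammer a q = (1 - a) * qPochhammer (a * q) q := by
  have hshift (n : ℕ) : a * q ^ (n + 1) = a * q * q ^ n := by ring
  rw [qPochhammer, tprod_eq_zero_mul' (by
    simpa only [hshift] using multipliable_one_sub_mul_pow (a * q) hq)]
  simp only [hshift, pow_zero, mul_one, qPochhammer]

lemma qPochhammer_ne_zero {a q : 𝕜} (ha : ‖a‖ < 1) (hq : ‖q‖ < 1) : qPochhammer a q ≠ 0 := by
  simp_rw [qPochhammer, sub_eq_add_neg]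
  refine tprod_one_add_ne_zero_of_summable (fun n h => ?_) (summable_norm_neg_mul_pow a hq)
  have hlt : ‖a * q ^ n‖ < 1 := by
    rw [norm_mul, norm_pow]
    exact mul_lt_one_of_nonneg_of_lt_one_left (norm_nonneg a) ha
      (pow_le_one₀ (norm_nonneg q) hq.le)
  have heq : a * q ^ n = 1 := by linear_combination -h
  simp [heq] at hlt

lemma continuousAt_qPochhammer (a : 𝕜) {q : 𝕜} (hq : ‖q‖ < 1) :
    ContinuousAt (fun p : 𝕜 × 𝕜 => qPochhammer p.1 p.2) (a, q) := by
  obtain ⟨ρ, hqρ, hρ⟩ := exists_between hq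
  have hρ0 : 0 ≤ ρ := (norm_nonneg q).trans hqρ.le
  have hbound : ∀ᶠ p : 𝕜 × 𝕜 in 𝓝 (a, q), ∀ n : ℕ,
      ‖-(p.1 * p.2 ^ n)‖ ≤ (‖a‖ + 1) * ρ ^ n := by
    filter_upwards [continuousAt_fst.norm.eventually_lt_const (lt_add_one ‖a‖),
      continuousAt_snd.norm.eventually_lt_const hqρ] with p hp₁ hp₂ n
    rw [norm_neg, norm_mul, norm_pow]
    gcongr
  simpa only [← sub_eq_add_neg] using! tendsto_tprod_one_add_of_dominated_convergence
    (f := fun (p : 𝕜 × 𝕜) (n : ℕ) => -(p.1 * p.2 ^ n)) (g := fun n => -(a * q ^ n))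
    ((summable_geometric_of_lt_one hρ0 hρ).mul_left _)
    (fun n => (by fun_prop : Continuous fun p : 𝕜 × 𝕜 => -(p.1 * p.2 ^ n)).tendsto (a, q))
    hbound

lemma tendsto_qPochhammer_div_qPochhammer_self (a : 𝕜) :
    Tendsto (fun q : 𝕜 => qPochhammer a q / qPochhammer q q) (𝓝 0) (𝓝 (1 - a)) := by
  have h0 : ‖(0 : 𝕜)‖ < 1 := by simp
  have hnum : ContinuousAt (fun q : 𝕜 => qPochhammer a q) 0 :=
    (continuousAt_qPochhammer a h0).comp (f := fun q => (a, q)) (by fun_prop)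
  have hden : ContinuousAt (fun q : 𝕜 => qPochhammer q q) 0 :=
    (continuousAt_qPochhammer 0 h0).comp (f := fun q => (q, q)) (by fun_prop)
  have h := hnum.tendsto.div hden.tendsto (by simp [qPochhammer_zero_right])
  simpa only [qPochhammer_zero_right, sub_zero, div_one, Pi.div_def] using h

end QPochhammer

section QNumber

/-- The `q`-number `[z]_q = (1 - q ^ z) / (1 - q)` as a function of `q`. It is written as a divided
difference of `q ↦ q ^ z`, which gives it the value `z` at `q = 1`. -/
noncomputable def qNumber (z : ℂ) : ℂ → ℂ :=
  dslope (fun q : ℂ => q ^ z) 1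

lemma slitPlane_mem_nhds_one : slitPlane ∈ 𝓝 (1 : ℂ) :=
  isOpen_slitPlane.mem_nhds one_mem_slitPlane

lemma differentiableOn_cpow_const (z : ℂ) : DifferentiableOn ℂ (fun q : ℂ => q ^ z) slitPlane :=
  differentiableOn_id.cpow_const fun _ hq => hq

lemma qNumber_one_right (z : ℂ) : qNumber z 1 = z := by
  have h : HasDerivAt (fun q : ℂ => q ^ z) z 1 := by
    simpa using (hasDerivAt_id (1 : ℂ)).cpow_const (c := z) one_mem_slitPlane
  rw [qNumber, dslope_same, h.deriv]

lemma one_sub_mul_qNumber (z q : ℂ) : (1 - q) * qNumber z q = 1 - q ^ z := by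
  have h := sub_smul_dslope (fun q : ℂ => q ^ z) 1 q
  simp only [smul_eq_mul, one_cpow] at h
  rw [qNumber]
  linear_combination -h

lemma continuousAt_qNumber (z : ℂ) {q : ℂ} (hq : q ∈ slitPlane) : ContinuousAt (qNumber z) q :=
  ((differentiableOn_dslope slitPlane_mem_nhds_one).2
    (differentiableOn_cpow_const z)).continuousOn.continuousAt (isOpen_slitPlane.mem_nhds hq)

lemma exists_norm_qNumber_sub_le (z : ℂ) {K : Set ℝ} (hK : IsCompact K) (hK0 : K ⊆ Set.Ioi 0) :
    ∃ C, 0 ≤ C ∧ ∀ q ∈ K, ‖qNumber z q - z‖ ≤ C * |q - 1| := by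
  have hsub : ofReal '' K ⊆ slitPlane := by
    rintro _ ⟨q, hq, rfl⟩
    exact ofReal_mem_slitPlane.2 (hK0 hq)
  obtain ⟨C, hC⟩ := exists_norm_dslope_sub_deriv_le slitPlane_mem_nhds_one
    (differentiableOn_cpow_const z) (hK.image continuous_ofReal) hsub
  rw [← dslope_same, ← qNumber, qNumber_one_right] at hC
  refine ⟨|C|, abs_nonneg C, fun q hq => (hC q (Set.mem_image_of_mem _ hq)).trans ?_⟩
  rw [← ofReal_one, ← ofReal_sub, norm_real, Real.norm_eq_abs]
  gcongr
  exact le_abs_self C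

lemma re_qNumber_nonneg {z : ℂ} (hz : 0 ≤ z.re) {q : ℝ} (hq : 0 < q) (hq1 : q ≤ 1) :
    0 ≤ (qNumber z q).re := by
  rcases hq1.eq_or_lt with rfl | hlt
  · simpa [qNumber_one_right] using hz
  have hre : ((q : ℂ) ^ z).re ≤ 1 := by
    refine (re_le_norm _).trans ?_
    rw [norm_cpow_eq_rpow_re_of_pos hq]
    exact Real.rpow_le_one hq.le hq1 hz
  have h := congrArg re (one_sub_mul_qNumber z q)
  rw [← ofReal_one, ← ofReal_sub, re_ofReal_mul, sub_re, ofReal_re] at h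
  exact nonneg_of_mul_nonneg_right (h ▸ sub_nonneg.2 hre) (sub_pos.2 hlt)

end QNumber

section QNat

/-- The `q`-number `[n]_q = 1 + q + ⋯ + q ^ (n - 1)` of a natural number, as a real number. -/
def qNat (q : ℝ) (n : ℕ) : ℝ :=
  ∑ i ∈ Finset.range n, q ^ i

/-- The relative increment `q ^ n / [n]_q = [n + 1]_q / [n]_q - 1` of the sequence `[n]_q`. -/
noncomputable def qIncrement (q : ℝ) (n : ℕ) : ℝ :=
  q ^ n / qNat q n

variable {q : ℝ} {n : ℕ}

lemma one_sub_mul_qNat (q : ℝ) (n : ℕ) : (1 - q) * qNat q n = 1 - q ^ n :=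
  mul_neg_geom_sum q n

lemma qNat_one_left (n : ℕ) : qNat 1 n = n := by
  simp [qNat]

lemma qNat_pos (hq : 0 ≤ q) (hn : n ≠ 0) : 0 < qNat q n :=
  geom_sum_pos hq hn

lemma natCast_mul_pow_le_qNat (hq : 0 ≤ q) (hq1 : q ≤ 1) (n : ℕ) : n * q ^ n ≤ qNat q n := by
  have h : ∀ i ∈ Finset.range n, q ^ n ≤ q ^ i := fun i hi =>
    pow_le_pow_of_le_one hq hq1 (Finset.mem_range.1 hi).le
  simpa [qNat] using Finset.card_nsmul_le_sum _ _ _ h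

lemma sq_mul_one_sub_mul_pow_le_two_mul_qNat (hq : 0 ≤ q) (hq1 : q ≤ 1) (n : ℕ) :
    n ^ 2 * ((1 - q) * q ^ n) ≤ 2 * qNat q n := by
  induction n with
  | zero => simp [qNat]
  | succ n ih =>
    have hsucc : qNat q (n + 1) = q * qNat q n + 1 := geom_sum_succ
    have hlinear : (1 - q) * ((n + 1 : ℕ) * q ^ (n + 1)) ≤ 1 :=
      calc (1 - q) * ((n + 1 : ℕ) * q ^ (n + 1))
          ≤ (1 - q) * qNat q (n + 1) := by
            gcongr
            exact natCast_mul_pow_le_qNat hq hq1 (n + 1)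
        _ = 1 - q ^ (n + 1) := one_sub_mul_qNat q (n + 1)
        _ ≤ 1 := sub_le_self _ (pow_nonneg hq _)
    have hpos : 0 ≤ (1 - q) * q ^ (n + 1) := mul_nonneg (sub_nonneg.2 hq1) (pow_nonneg hq _)
    calc ((n + 1 : ℕ) : ℝ) ^ 2 * ((1 - q) * q ^ (n + 1))
        = q * (n ^ 2 * ((1 - q) * q ^ n)) + 2 * ((1 - q) * ((n + 1 : ℕ) * q ^ (n + 1)))
          - (1 - q) * q ^ (n + 1) := by push_cast; ring
      _ ≤ q * (2 * qNat q n) + 2 * 1 - 0 := by gcongr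
      _ = 2 * qNat q (n + 1) := by rw [hsucc]; ring

lemma qIncrement_nonneg (hq : 0 ≤ q) (n : ℕ) : 0 ≤ qIncrement q n :=
  div_nonneg (pow_nonneg hq n) (Finset.sum_nonneg fun i _ => pow_nonneg hq i)

lemma one_add_qIncrement (hq : 0 ≤ q) (hn : n ≠ 0) :
    1 + qIncrement q n = qNat q (n + 1) / qNat q n := by
  have := (qNat_pos hq hn).ne'
  rw [qIncrement, one_add_div this, qNat, qNat, Finset.sum_range_succ]

lemma qIncrement_le_one_div (hq : 0 ≤ q) (hq1 : q ≤ 1) (hn : n ≠ 0) :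
    qIncrement q n ≤ 1 / n := by
  rw [qIncrement, div_le_div_iff₀ (qNat_pos hq hn) (by positivity)]
  linarith [natCast_mul_pow_le_qNat hq hq1 n]

lemma one_sub_mul_qIncrement_le_two_div_sq (hq : 0 ≤ q) (hq1 : q ≤ 1) (hn : n ≠ 0) :
    (1 - q) * qIncrement q n ≤ 2 / n ^ 2 := by
  rw [qIncrement, mul_div_assoc', div_le_div_iff₀ (qNat_pos hq hn) (by positivity)]
  linarith [sq_mul_one_sub_mul_pow_le_two_mul_qNat hq hq1 n]

lemma continuousAt_qIncrement (hq : 0 ≤ q) (hn : n ≠ 0) :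
    ContinuousAt (fun q => qIncrement q n) q := by
  unfold qIncrement qNat
  exact ContinuousAt.div (by fun_prop) (by fun_prop) (qNat_pos hq hn).ne'

lemma one_le_norm_one_add_qIncrement_mul_qNumber {z : ℂ} (hz : 0 ≤ z.re) (hq : 0 < q)
    (hq1 : q ≤ 1) (n : ℕ) : 1 ≤ ‖1 + qIncrement q n * qNumber z q‖ := by
  refine le_trans ?_ (re_le_norm _)
  rw [add_re, one_re, re_ofReal_mul]
  exact le_add_of_nonneg_right
    (mul_nonneg (qIncrement_nonneg hq.le n) (re_qNumber_nonneg hz hq hq1))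

end QNat

section EulerProduct

/-- The `n`-th factor `([n + 2] / [n + 1]) ^ z * ([n + 1] / [n + 1 + z])`, written in `q`-numbers,
of the `q`-analogue of Euler's infinite product for `Γ (z + 1)`, which is the case `q = 1`. The
second ratio is encoded through `[n + z] = [n] + q ^ n * [z]`. -/
noncomputable def qEulerFactor (q : ℝ) (z : ℂ) (n : ℕ) : ℂ :=
  ((1 + qIncrement q (n + 1) : ℝ) : ℂ) ^ z / (1 + qIncrement q (n + 1) * qNumber z q)

variable {q : ℝ} {z : ℂ}

lemma qEulerFactor_sub_one (hz : 0 ≤ z.re) (hq : 0 < q) (hq1 : q ≤ 1) (n : ℕ) :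
    qEulerFactor q z n - 1 =
      qIncrement q (n + 1) * ((qNumber z (1 + qIncrement q (n + 1) : ℝ) - z) - (qNumber z q - z)) /
        (1 + qIncrement q (n + 1) * qNumber z q) := by
  have hden : 1 + qIncrement q (n + 1) * qNumber z q ≠ 0 := norm_pos_iff.1
    (one_pos.trans_le (one_le_norm_one_add_qIncrement_mul_qNumber hz hq hq1 (n + 1)))
  have hnum := one_sub_mul_qNumber z (1 + qIncrement q (n + 1) : ℝ)
  rw [qEulerFactor, div_sub_one hden]
  congr 1
  push_cast at hnum ⊢
  linear_combination hnum

/- With `δ = qIncrement q (n + 1)`, the terms of order `δ` cancel in `qEulerFactor q z n - 1`. What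
is left is `δ * O(δ) + δ * O(1 - q)`, and both summands are `O(n⁻²)` uniformly in `q`. -/
lemma exists_norm_qEulerFactor_sub_one_le (hz : 0 ≤ z.re) :
    ∃ C : ℝ, ∀ q ∈ Set.Icc (1 / 2 : ℝ) 1, ∀ n : ℕ,
      ‖qEulerFactor q z n - 1‖ ≤ C * (1 / ((n + 1 : ℕ) : ℝ) ^ 2) := by
  obtain ⟨C, hC0, hC⟩ := exists_norm_qNumber_sub_le z (isCompact_Icc (a := (1 / 2 : ℝ)) (b := 2))
    fun u hu => one_half_pos.trans_le hu.1
  refine ⟨3 * C, fun q hq n => ?_⟩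
  have hq0 : 0 < q := by linarith [hq.1]
  have hδ0 := qIncrement_nonneg hq0.le (n + 1)
  have hδ := qIncrement_le_one_div hq0.le hq.2 n.succ_ne_zero
  have hδq := one_sub_mul_qIncrement_le_two_div_sq hq0.le hq.2 n.succ_ne_zero
  have hden := one_le_norm_one_add_qIncrement_mul_qNumber hz hq0 hq.2 (n + 1)
  rw [qEulerFactor_sub_one hz hq0 hq.2]
  set δ := qIncrement q (n + 1)
  have hδ1 : δ ≤ 1 := hδ.trans (div_le_self zero_le_one (mod_cast n.succ_pos))
  have hnumδ : ‖qNumber z (1 + δ : ℝ) - z‖ ≤ C * δ := by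
    simpa [abs_of_nonneg hδ0] using hC (1 + δ) ⟨by linarith, by linarith⟩
  have hnumq : ‖qNumber z q - z‖ ≤ C * (1 - q) := by
    simpa [abs_of_nonpos (sub_nonpos.2 hq.2)] using hC q ⟨hq.1, by linarith [hq.2]⟩
  calc ‖δ * ((qNumber z (1 + δ : ℝ) - z) - (qNumber z q - z)) / (1 + δ * qNumber z q)‖
      ≤ ‖δ * ((qNumber z (1 + δ : ℝ) - z) - (qNumber z q - z))‖ := by
        rw [norm_div]
        exact div_le_self (norm_nonneg _) hden
    _ ≤ δ * (C * δ + C * (1 - q)) := by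
        rw [norm_mul, norm_real, Real.norm_of_nonneg hδ0]
        gcongr
        exact (norm_sub_le _ _).trans (add_le_add hnumδ hnumq)
    _ = C * (δ ^ 2 + (1 - q) * δ) := by ring
    _ ≤ C * ((1 / (n + 1 : ℕ)) ^ 2 + 2 / (n + 1 : ℕ) ^ 2) := by gcongr
    _ = 3 * C * (1 / ((n + 1 : ℕ) : ℝ) ^ 2) := by ring

lemma summable_mul_one_div_succ_sq (C : ℝ) :
    Summable fun n : ℕ => C * (1 / ((n + 1 : ℕ) : ℝ) ^ 2) :=
  ((summable_nat_add_iff 1).2 (Real.summable_one_div_nat_pow.2 one_lt_two)).mul_left C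

lemma multipliable_qEulerFactor (hz : 0 ≤ z.re) (hq : q ∈ Set.Icc (1 / 2 : ℝ) 1) :
    Multipliable (qEulerFactor q z) := by
  obtain ⟨C, hC⟩ := exists_norm_qEulerFactor_sub_one_le hz
  simpa using multipliable_one_add_of_summable
    ((summable_mul_one_div_succ_sq C).of_nonneg_of_le (fun _ => norm_nonneg _) (hC q hq))

lemma continuousAt_qEulerFactor (hz : 0 ≤ z.re) (hq : 0 < q) (hq1 : q ≤ 1) (n : ℕ) :
    ContinuousAt (fun q => qEulerFactor q z n) q := by
  have hδ := continuousAt_qIncrement hq.le n.succ_ne_zero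
  have hbase : 1 + qIncrement q (n + 1) ≠ 0 := by
    linarith [qIncrement_nonneg hq.le (n + 1)]
  have hnum : ContinuousAt (fun q : ℝ => qNumber z q) q :=
    (continuousAt_qNumber z (ofReal_mem_slitPlane.2 hq)).comp continuous_ofReal.continuousAt
  have hpow : ContinuousAt (fun q => ((1 + qIncrement q (n + 1) : ℝ) : ℂ) ^ z) q :=
    (continuousAt_ofReal_cpow_const _ z (.inr hbase)).comp (f := fun q => 1 + qIncrement q (n + 1))
      (g := fun t : ℝ => (t : ℂ) ^ z) (hδ.const_add 1)
  exact hpow.div (((continuous_ofReal.continuousAt.comp hδ).mul hnum).const_add 1) <|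
    norm_pos_iff.1
      (one_pos.trans_le (one_le_norm_one_add_qIncrement_mul_qNumber hz hq hq1 (n + 1)))

lemma tendsto_tprod_qEulerFactor (hz : 0 ≤ z.re) :
    Tendsto (fun q => ∏' n, qEulerFactor q z n) (𝓝[<] 1) (𝓝 (∏' n, qEulerFactor 1 z n)) := by
  obtain ⟨C, hC⟩ := exists_norm_qEulerFactor_sub_one_le hz
  have hIcc : ∀ᶠ q : ℝ in 𝓝[<] 1, q ∈ Set.Icc (1 / 2 : ℝ) 1 :=
    Icc_mem_nhdsLT (by norm_num)
  simpa using tendsto_tprod_one_add_of_dominated_convergence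
    (f := fun q n => qEulerFactor q z n - 1) (summable_mul_one_div_succ_sq C)
    (fun n => ((continuousAt_qEulerFactor hz one_pos le_rfl n).tendsto.mono_left
      nhdsWithin_le_nhds).sub_const 1)
    (hIcc.mono hC)

lemma prod_qEulerFactor (hq : 0 ≤ q) (z : ℂ) (N : ℕ) :
    ∏ n ∈ Finset.range N, qEulerFactor q z n =
      (qNat q (N + 1) : ℂ) ^ z /
        ∏ n ∈ Finset.range N, (1 + qIncrement q (n + 1) * qNumber z q) := by
  induction N with
  | zero => simp [qNat]
  | succ N ih =>
    have hpos := qNat_pos hq N.succ_ne_zero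
    have hmul : (qNat q (N + 1) : ℂ) ^ z * ((1 + qIncrement q (N + 1) : ℝ) : ℂ) ^ z =
        (qNat q (N + 2) : ℂ) ^ z := by
      rw [← mul_cpow_ofReal_nonneg hpos.le (add_nonneg zero_le_one (qIncrement_nonneg hq _)),
        ← ofReal_mul, one_add_qIncrement hq N.succ_ne_zero, mul_div_cancel₀ _ hpos.ne']
    rw [Finset.prod_range_succ, ih, Finset.prod_range_succ, qEulerFactor, div_mul_div_comm, hmul]

lemma prod_qEulerFactor_one_eq_mul_GammaSeq (hz : 0 ≤ z.re) (hz0 : z ≠ 0) (N : ℕ) :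
    ∏ n ∈ Finset.range N, qEulerFactor 1 z n =
      z * GammaSeq z (N + 1) * (1 + z / (N + 1 : ℕ)) := by
  have hne (n : ℕ) : z + (n + 1 : ℕ) ≠ 0 := fun h => by
    have := congrArg re h
    rw [add_re, natCast_re, zero_re] at this
    push_cast at this
    linarith [(n.cast_nonneg : (0 : ℝ) ≤ n)]
  have hden : ∏ n ∈ Finset.range N, (1 + qIncrement 1 (n + 1) * qNumber z (1 : ℝ)) =
      (∏ n ∈ Finset.range N, (z + (n + 1 : ℕ))) / N.factorial := by
    rw [← Finset.prod_range_add_one_eq_factorial, Nat.cast_prod, ← Finset.prod_div_distrib]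
    refine Finset.prod_congr rfl fun n _ => ?_
    have : ((n + 1 : ℕ) : ℂ) ≠ 0 := Nat.cast_ne_zero.2 n.succ_ne_zero
    rw [qIncrement, qNat_one_left, ofReal_one, qNumber_one_right]
    push_cast at this ⊢
    field_simp
    ring
  have hN : ((N + 1 : ℕ) : ℂ) ≠ 0 := Nat.cast_ne_zero.2 N.succ_ne_zero
  rw [prod_qEulerFactor zero_le_one, qNat_one_left, ofReal_natCast, hden, GammaSeq,
    Finset.prod_range_succ', Finset.prod_range_succ, Nat.factorial_succ, Nat.cast_zero, add_zero]
  have hprod : ∏ n ∈ Finset.range N, (z + (n + 1 : ℕ)) ≠ 0 :=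
    Finset.prod_ne_zero_iff.2 fun n _ => hne n
  have hlast := hne N
  rw [one_add_div hN, add_comm _ z, Nat.cast_mul]
  field_simp

lemma tprod_qEulerFactor_one (hz : 0 ≤ z.re) : ∏' n, qEulerFactor 1 z n = Gamma (z + 1) := by
  rcases eq_or_ne z 0 with rfl | hz0
  · simp [qEulerFactor, qNumber_one_right]
  refine tendsto_nhds_unique
    (multipliable_qEulerFactor hz ⟨by norm_num, le_rfl⟩).hasProd.tendsto_prod_nat ?_
  simp_rw [prod_qEulerFactor_one_eq_mul_GammaSeq hz hz0]
  have hcorr : Tendsto (fun N : ℕ => 1 + z / (N + 1 : ℕ)) atTop (𝓝 1) := by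
    simpa using ((tendsto_const_div_atTop_nhds_zero_nat z).comp
      (tendsto_add_atTop_nat 1)).const_add 1
  simpa [Gamma_add_one z hz0] using
    (((GammaSeq_tendsto_Gamma z).comp (tendsto_add_atTop_nat 1)).const_mul z).mul hcorr

end EulerProduct

section QGamma

/-- Jackson's `q`-Gamma function `Γ_q(z) = (1 - q) ^ (1 - z) * (q; q)_∞ / (q ^ z; q)_∞`, for
`0 < q < 1`. -/
noncomputable def qGamma (q : ℝ) (z : ℂ) : ℂ :=
  ((1 - q : ℝ) : ℂ) ^ (1 - z) * qPochhammer (q : ℂ) q / qPochhammer ((q : ℂ) ^ z) q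

variable {q : ℝ} {z : ℂ}

lemma norm_ofReal_lt_one (hq : 0 < q) (hq1 : q < 1) : ‖(q : ℂ)‖ < 1 := by
  rwa [norm_real, Real.norm_of_nonneg hq.le]

lemma qGamma_eq_div_qNumber (hq : 0 < q) (hq1 : q < 1) (z : ℂ) :
    qGamma q z = qGamma q (z + 1) / qNumber z q := by
  have hq0 : (q : ℂ) ≠ 0 := ofReal_ne_zero.2 hq.ne'
  have hsub : (1 - q : ℂ) ≠ 0 := mod_cast (sub_pos.2 hq1).ne'
  have hz : qNumber z q = (1 - (q : ℂ) ^ z) / (1 - q) :=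
    eq_div_of_mul_eq hsub (by rw [mul_comm, one_sub_mul_qNumber])
  have hpow : ((1 - q : ℝ) : ℂ) ^ (1 - z) = ((1 - q : ℝ) : ℂ) ^ (1 - (z + 1)) * (1 - q) := by
    rw [← sub_sub, ofReal_sub, ofReal_one, cpow_sub _ 1 hsub, cpow_one, div_mul_cancel₀ _ hsub]
  rw [qGamma, qGamma, hz, hpow, qPochhammer_eq_one_sub_mul (q ^ z : ℂ) (norm_ofReal_lt_one hq hq1),
    cpow_add _ _ hq0, cpow_one, div_div_div_eq, mul_right_comm, mul_comm (1 - (q : ℂ) ^ z)]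

lemma one_sub_div_cpow_mul_qGamma_add_one (hq1 : q < 1) {s : ℝ} (hs : 0 ≤ s) (z : ℂ) :
    (((1 - q) / s : ℝ) : ℂ) ^ z * qGamma q (z + 1) =
      qPochhammer (q : ℂ) q / ((s : ℂ) ^ z * qPochhammer ((q : ℂ) ^ (z + 1)) q) := by
  have hsub := sub_pos.2 hq1
  have hpow : ((1 - q : ℝ) : ℂ) ^ z ≠ 0 := cpow_ne_zero_iff.2 (.inl (ofReal_ne_zero.2 hsub.ne'))
  rw [qGamma, sub_add_cancel_right, cpow_neg, ofReal_div, div_cpow_ofReal_nonneg hsub.le hs,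
    div_mul_div_comm, mul_inv_cancel_left₀ hpow]

lemma one_add_qIncrement_mul_qNumber (hq : 0 < q) (hq1 : q < 1) (z : ℂ) {n : ℕ} :
    1 + qIncrement q (n + 1) * qNumber z q =
      (1 - (q : ℂ) ^ (z + 1) * (q : ℂ) ^ n) / (1 - q * (q : ℂ) ^ n) := by
  have hq0 : (q : ℂ) ≠ 0 := ofReal_ne_zero.2 hq.ne'
  have hpow : (1 - q * (q : ℂ) ^ n) ≠ 0 := by
    rw [← pow_succ']
    exact_mod_cast (sub_pos.2 (pow_lt_one₀ hq.le hq1 n.succ_ne_zero)).ne'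
  have hnat : (1 - q : ℂ) * qNat q (n + 1) = 1 - q * (q : ℂ) ^ n := by
    rw [← pow_succ']
    exact_mod_cast one_sub_mul_qNat q (n + 1)
  have hz := one_sub_mul_qNumber z q
  rw [eq_div_iff hpow, cpow_add _ _ hq0, cpow_one, ← hnat, qIncrement]
  have : (qNat q (n + 1) : ℂ) ≠ 0 := right_ne_zero_of_mul (hnat ▸ hpow)
  push_cast
  field_simp
  linear_combination hnat + q ^ (n + 1) * hz

lemma tprod_qEulerFactor_of_lt_one (hz : 0 ≤ z.re) (hq : 1 / 2 ≤ q) (hq1 : q < 1) :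
    ∏' n, qEulerFactor q z n = qGamma q (z + 1) := by
  have hq0 : 0 < q := one_half_pos.trans_le hq
  have hnorm := norm_ofReal_lt_one hq0 hq1
  have hpow : ‖(q : ℂ) ^ (z + 1)‖ < 1 := by
    rw [norm_cpow_eq_rpow_re_of_pos hq0, add_re, one_re]
    exact Real.rpow_lt_one hq0.le hq1 (by linarith)
  have hnat : Tendsto (fun N => qNat q (N + 1)) atTop (𝓝 (1 - q)⁻¹) :=
    (hasSum_geometric_of_lt_one hq0.le hq1).tendsto_sum_nat.comp (tendsto_add_atTop_nat 1)
  have hcpow : Tendsto (fun N => (qNat q (N + 1) : ℂ) ^ z) atTop (𝓝 (((1 - q)⁻¹ : ℝ) ^ z)) :=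
    (continuousAt_ofReal_cpow_const _ z (.inr (inv_ne_zero (sub_pos.2 hq1).ne'))).tendsto.comp hnat
  have hinv : (((1 - q)⁻¹ : ℝ) : ℂ) ^ z = ((1 - q : ℝ) : ℂ) ^ (1 - (z + 1)) := by
    rw [ofReal_inv, inv_cpow_ofReal_nonneg (sub_nonneg.2 hq1.le), ← cpow_neg,
      sub_add_cancel_right]
  refine tendsto_nhds_unique
    (multipliable_qEulerFactor hz ⟨hq, hq1.le⟩).hasProd.tendsto_prod_nat ?_
  simp_rw [prod_qEulerFactor hq0.le, one_add_qIncrement_mul_qNumber hq0 hq1,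
    Finset.prod_div_distrib, div_div_eq_mul_div]
  rw [qGamma, ← hinv]
  exact (hcpow.mul (multipliable_one_sub_mul_pow (q : ℂ) hnorm).hasProd.tendsto_prod_nat).div
    (multipliable_one_sub_mul_pow _ hnorm).hasProd.tendsto_prod_nat
    (qPochhammer_ne_zero hpow hnorm)

lemma tendsto_qGamma_of_one_le_re (hz : 1 ≤ z.re) :
    Tendsto (fun q => qGamma q z) (𝓝[<] 1) (𝓝 (Gamma z)) := by
  have hz' : 0 ≤ (z - 1).re := by simpa using hz
  have h := tendsto_tprod_qEulerFactor hz'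
  rw [tprod_qEulerFactor_one hz', sub_add_cancel] at h
  refine h.congr' ?_
  filter_upwards [Ico_mem_nhdsLT one_half_lt_one] with q hq
  rw [tprod_qEulerFactor_of_lt_one hz' hq.1 hq.2, sub_add_cancel]

lemma tendsto_qGamma (hz : ∀ n : ℕ, z ≠ -n) :
    Tendsto (fun q => qGamma q z) (𝓝[<] 1) (𝓝 (Gamma z)) := by
  obtain ⟨k, hk⟩ := exists_nat_ge (1 - z.re)
  induction k generalizing z with
  | zero => exact tendsto_qGamma_of_one_le_re (by simpa using hk)
  | succ k ih =>
    have hz0 : z ≠ 0 := by simpa using hz 0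
    have hnum : Tendsto (fun q => qGamma q (z + 1)) (𝓝[<] 1) (𝓝 (Gamma (z + 1))) := by
      refine ih (fun n hn => hz (n + 1) ?_) ?_
      · push_cast
        linear_combination hn
      · push_cast at hk
        rw [add_re, one_re]
        linarith
    have hden : Tendsto (fun q : ℝ => qNumber z q) (𝓝[<] 1) (𝓝 z) := by
      have h := (continuousAt_qNumber z one_mem_slitPlane).tendsto
      rw [qNumber_one_right] at h
      exact h.comp ((continuous_ofReal.tendsto' 1 1 ofReal_one).mono_left nhdsWithin_le_nhds)
    have h := hnum.div hden hz0
    rw [Gamma_add_one z hz0, mul_div_cancel_left₀ _ hz0] at h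
    refine h.congr' ?_
    filter_upwards [Ioo_mem_nhdsLT one_pos] with q hq
    exact (qGamma_eq_div_qNumber hq.1 hq.2 z).symm

end QGamma

section Modularity

lemma eta_eq_exp_mul_qPochhammer (τ : ℂ) :
    ModularForm.eta τ = exp (Real.pi * I * τ / 12) *
      qPochhammer (exp (2 * Real.pi * I * τ)) (exp (2 * Real.pi * I * τ)) := by
  simp_rw [ModularForm.eta, ModularForm.eta_q_eq_pow, qPochhammer, ← pow_succ',
    Function.Periodic.qParam]
  congr 2
  push_cast
  ring

lemma zetaBar_mul_qPochhammer {b : ℂ} (hre : 0 < b.re) (him : 0 < (b ^ 2).im) :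
    zetaBar b * qPochhammer (exp (2 * Real.pi * I * (-1 / b ^ 2)))
        (exp (2 * Real.pi * I * (-1 / b ^ 2))) =
      -I * b * qPochhammer (exp (2 * Real.pi * I * b ^ 2)) (exp (2 * Real.pi * I * b ^ 2)) := by
  have hsqrt : sqrt (b ^ 2) = b := by rw [sqrt, sq_cpow_two_inv hre]
  have hsqrtI : sqrt I = exp (Real.pi * I / 4) := by
    rw [sqrt, cpow_def_of_ne_zero I_ne_zero, log_I]
    ring_nf
  have heta := ModularForm.eta_comp_eq_csqrt_I_inv (x := b ^ 2) him
  simp only [Function.comp_apply, Pi.smul_apply, Pi.mul_apply, smul_eq_mul, hsqrt, hsqrtI,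
    eta_eq_exp_mul_qPochhammer] at heta
  have hzeta : zetaBar b = exp (-(Real.pi / 2 * I)) * exp (Real.pi * I / 4) *
      (exp (Real.pi * I * b ^ 2 / 12))⁻¹ * exp (Real.pi * I * (-1 / b ^ 2) / 12) := by
    rw [zetaBar, ← exp_neg, ← exp_add, ← exp_add, ← exp_add]
    congr 1
    ring
  have hI : exp (-(Real.pi / 2 * I)) = -I := by
    rw [exp_neg, exp_pi_div_two_mul_I, inv_I]
  rw [hzeta, hI, mul_assoc, heta]
  field_simp

lemma Gb_add_inv_add_mul {b : ℂ} (hb : b ≠ 0) (x : ℂ) :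
    Gb b (b + b⁻¹ + b * x) =
      zetaBar b * qPochhammer (exp (2 * Real.pi * I * x)) (exp (2 * Real.pi * I * (-1 / b ^ 2))) /
        qPochhammer (exp (2 * Real.pi * I * b ^ 2 * (x + 1))) (exp (2 * Real.pi * I * b ^ 2)) := by
  have hnum (n : ℕ) : exp (2 * Real.pi * I * b⁻¹ * (b + b⁻¹ + b * x - (n + 1) * b⁻¹)) =
      exp (2 * Real.pi * I * x) * exp (2 * Real.pi * I * (-1 / b ^ 2)) ^ n := by
    rw [← exp_nat_mul, ← exp_add, ← exp_periodic (2 * Real.pi * I * x + _)]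
    congr 1
    field_simp
    ring
  have hden (n : ℕ) : exp (2 * Real.pi * I * b * (b + b⁻¹ + b * x + n * b)) =
      exp (2 * Real.pi * I * b ^ 2 * (x + 1)) * exp (2 * Real.pi * I * b ^ 2) ^ n := by
    rw [← exp_nat_mul, ← exp_add, ← exp_periodic (2 * Real.pi * I * b ^ 2 * (x + 1) + _)]
    congr 1
    field_simp
    ring
  simp_rw [Gb, hnum, hden, qPochhammer]

lemma mul_Gb_add_inv_add_mul {b : ℂ} (hre : 0 < b.re) (him : 0 < (b ^ 2).im) (x : ℂ) :
    b * Gb b (b + b⁻¹ + b * x) =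
      qPochhammer (exp (2 * Real.pi * I * x)) (exp (2 * Real.pi * I * (-1 / b ^ 2))) /
        qPochhammer (exp (2 * Real.pi * I * (-1 / b ^ 2))) (exp (2 * Real.pi * I * (-1 / b ^ 2))) *
      (-I * b ^ 2 * qPochhammer (exp (2 * Real.pi * I * b ^ 2)) (exp (2 * Real.pi * I * b ^ 2)) /
        qPochhammer (exp (2 * Real.pi * I * b ^ 2 * (x + 1))) (exp (2 * Real.pi * I * b ^ 2))) := by
  have hb : b ≠ 0 := by
    rintro rfl
    simp at hre
  have him' : 0 < (-1 / b ^ 2).im := by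
    simpa using UpperHalfPlane.im_pnat_div_pos 1 (UpperHalfPlane.mk (b ^ 2) him)
  have hne : qPochhammer (exp (2 * Real.pi * I * (-1 / b ^ 2)))
      (exp (2 * Real.pi * I * (-1 / b ^ 2))) ≠ 0 :=
    have hτ := UpperHalfPlane.norm_exp_two_pi_I_lt_one (UpperHalfPlane.mk (-1 / b ^ 2) him')
    qPochhammer_ne_zero hτ hτ
  rw [Gb_add_inv_add_mul hb, eq_div_of_mul_eq hne (zetaBar_mul_qPochhammer hre him)]
  ring

end Modularity

section Limit

lemma br_sq {r : ℝ} (hr : 0 ≤ r) : br r ^ 2 = I * r := by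
  have harg : ((2 : ℕ) * (Real.pi * I / 4) : ℂ) = Real.pi / 2 * I := by
    push_cast
    ring
  rw [br, mul_pow, ← exp_nat_mul, harg, exp_pi_div_two_mul_I, ← ofReal_pow, Real.sq_sqrt hr]

lemma re_br_pos {r : ℝ} (hr : 0 < r) : 0 < (br r).re := by
  have harg : (Real.pi * I / 4 : ℂ) = (Real.pi / 4 : ℝ) * I := by
    push_cast
    ring
  rw [br, re_mul_ofReal, harg, exp_ofReal_mul_I_re, Real.cos_pi_div_four]
  positivity

lemma br_mul_Gb_br {r : ℝ} (hr : 0 < r) (x : ℂ) :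
    br r * Gb (br r) (br r + (br r)⁻¹ + br r * x) =
      qPochhammer (exp (2 * Real.pi * I * x)) (Real.exp (-(2 * Real.pi / r))) /
          qPochhammer (Real.exp (-(2 * Real.pi / r)) : ℂ) (Real.exp (-(2 * Real.pi / r))) *
        (r * qPochhammer (Real.exp (-(2 * Real.pi * r)) : ℂ) (Real.exp (-(2 * Real.pi * r))) /
          qPochhammer ((Real.exp (-(2 * Real.pi * r)) : ℂ) ^ (x + 1))
            (Real.exp (-(2 * Real.pi * r)))) := by
  have hq : exp (2 * Real.pi * I * (I * r)) = (Real.exp (-(2 * Real.pi * r)) : ℂ) := by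
    push_cast
    congr 1
    linear_combination 2 * Real.pi * r * I_mul_I
  have hqx : exp (2 * Real.pi * I * (I * r) * (x + 1)) =
      (Real.exp (-(2 * Real.pi * r)) : ℂ) ^ (x + 1) := by
    rw [cpow_def_of_ne_zero (ofReal_ne_zero.2 (Real.exp_ne_zero _)),
      ← ofReal_log (Real.exp_nonneg _), Real.log_exp]
    congr 1
    push_cast
    linear_combination 2 * Real.pi * r * (x + 1) * I_mul_I
  have hdual : exp (2 * Real.pi * I * (-1 / (I * r))) = (Real.exp (-(2 * Real.pi / r)) : ℂ) := by
    have hr0 : (r : ℂ) ≠ 0 := ofReal_ne_zero.2 hr.ne'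
    push_cast
    congr 1
    field_simp
  have hbr : -I * (I * r) = r := by linear_combination -r * I_mul_I
  have h := mul_Gb_add_inv_add_mul (re_br_pos hr) (by simpa [br_sq hr.le] using hr) x
  rwa [br_sq hr.le, hq, hqx, hdual, hbr] at h

lemma two_pi_mul_br_mul_Gb_br_div_cpow {r : ℝ} (hr : 0 < r) (x : ℂ) :
    2 * (Real.pi : ℂ) * br r * Gb (br r) (br r + (br r)⁻¹ + br r * x) /
        ((2 * Real.pi * r : ℝ) : ℂ) ^ (x + 1) =
      qPochhammer (exp (2 * Real.pi * I * x)) (Real.exp (-(2 * Real.pi / r))) /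
          qPochhammer (Real.exp (-(2 * Real.pi / r)) : ℂ) (Real.exp (-(2 * Real.pi / r))) *
        ((((1 - Real.exp (-(2 * Real.pi * r))) / (2 * Real.pi * r) : ℝ) : ℂ) ^ x *
          qGamma (Real.exp (-(2 * Real.pi * r))) (x + 1)) := by
  have hs : 0 < 2 * Real.pi * r := by positivity
  have hs0 : ((2 * Real.pi * r : ℝ) : ℂ) ≠ 0 := ofReal_ne_zero.2 hs.ne'
  have hq1 : Real.exp (-(2 * Real.pi * r)) < 1 := Real.exp_lt_one_iff.2 (neg_lt_zero.2 hs)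
  have hr0 : (r : ℂ) ≠ 0 := ofReal_ne_zero.2 hr.ne'
  have hpi0 : (Real.pi : ℂ) ≠ 0 := ofReal_ne_zero.2 Real.pi_ne_zero
  rw [one_sub_div_cpow_mul_qGamma_add_one hq1 hs.le, mul_assoc, br_mul_Gb_br hr,
    cpow_add _ _ hs0, cpow_one]
  push_cast
  field_simp

lemma tendsto_exp_neg_two_pi_div_nhdsGT_zero :
    Tendsto (fun r : ℝ => Real.exp (-(2 * Real.pi / r))) (𝓝[>] 0) (𝓝 0) := by
  simp_rw [div_eq_mul_inv]
  exact Real.tendsto_exp_neg_atTop_nhds_zero.comp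
    (tendsto_inv_nhdsGT_zero.const_mul_atTop Real.two_pi_pos)

lemma tendsto_two_pi_mul_nhdsGT_zero :
    Tendsto (fun r : ℝ => 2 * Real.pi * r) (𝓝[>] 0) (𝓝[>] 0) :=
  tendsto_iff_comap.2 (comap_mulLeft_nhdsGT_zero Real.two_pi_pos).ge

lemma tendsto_exp_neg_nhdsLT_one :
    Tendsto (fun s : ℝ => Real.exp (-s)) (𝓝[>] 0) (𝓝[<] 1) := by
  have h : Continuous fun s : ℝ => Real.exp (-s) := by fun_prop
  exact tendsto_nhdsWithin_iff.2 ⟨(h.tendsto' 0 1 (by simp)).mono_left nhdsWithin_le_nhds,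
    eventually_nhdsWithin_of_forall fun s (hs : 0 < s) =>
      Real.exp_lt_one_iff.2 (neg_lt_zero.2 hs)⟩

lemma tendsto_one_sub_exp_neg_div_cpow (x : ℂ) :
    Tendsto (fun s : ℝ => (((1 - Real.exp (-s)) / s : ℝ) : ℂ) ^ x) (𝓝[>] 0) (𝓝 1) := by
  have hslope : Tendsto (fun s : ℝ => (1 - Real.exp (-s)) / s) (𝓝[>] 0) (𝓝 1) := by
    have h : HasDerivAt (fun s : ℝ => 1 - Real.exp (-s)) 1 0 := by
      simpa using ((hasDerivAt_neg (0 : ℝ)).exp).const_sub 1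
    simpa [div_eq_inv_mul] using h.tendsto_slope_zero_right
  have hcpow := (continuousAt_ofReal_cpow_const 1 x (.inr one_ne_zero)).tendsto
  rw [ofReal_one, one_cpow] at hcpow
  exact hcpow.comp hslope

end Limit

/-- For `x ∉ {−1, −2, −3, …}`,
`lim_{r→0⁺} (2π b(r)) G_{b(r)}(Q(r) + b(r) x) / (2πr)^{x+1} = (1 − e^{2πix}) Γ(x+1)`,
where `Q(r) = b(r) + b(r)⁻¹`. -/
theorem stmt1 (x : ℂ) (hx : ∀ n : ℕ, x ≠ -((n : ℂ) + 1)) :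
    Tendsto
      (fun r : ℝ =>
        2 * (Real.pi : ℂ) * br r * Gb (br r) (br r + (br r)⁻¹ + br r * x) /
          ((2 * Real.pi * r : ℝ) : ℂ) ^ (x + 1))
      (𝓝[>] (0 : ℝ))
      (𝓝 ((1 - Complex.exp (2 * Real.pi * Complex.I * x)) * Complex.Gamma (x + 1))) := by
  have hs := tendsto_two_pi_mul_nhdsGT_zero
  have hdual : Tendsto (fun r : ℝ => (Real.exp (-(2 * Real.pi / r)) : ℂ)) (𝓝[>] 0) (𝓝 0) :=
    (continuous_ofReal.tendsto' 0 0 ofReal_zero).comp tendsto_exp_neg_two_pi_div_nhdsGT_zero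
  have hPochhammer := (tendsto_qPochhammer_div_qPochhammer_self (exp (2 * Real.pi * I * x))).comp
    hdual
  have hpow := (tendsto_one_sub_exp_neg_div_cpow x).comp hs
  have hGamma := (tendsto_qGamma (z := x + 1) fun n hn => hx n (by linear_combination hn)).comp
    (tendsto_exp_neg_nhdsLT_one.comp hs)
  have hlim := hPochhammer.mul (hpow.mul hGamma)
  rw [one_mul] at hlim
  refine hlim.congr' ?_
  filter_upwards [self_mem_nhdsWithin] with r hr
  exact (two_pi_mul_br_mul_Gb_br_div_cpow hr x).symm
end

section
/- For every real r > 0 one has the identity e^{−π/(12r)} · ∏_{n=1}^∞ (1 − e^{−2πn/r}) = √r · e^{−πr/12} · ∏_{n=1}^∞ (1 − e^{−2πrn}). -/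
/-! On the imaginary axis the nome `e^{2πiτ}` is real, so `η(ir)` is a real infinite product. Since
`-1/(ir) = i/r` and `-i(ir) = r`, the identity is the transformation law `η(-1/τ) = √(-iτ) η(τ)` at
`τ = ir`. The factor is `√(-iτ) = √τ / √i` because `arg i + arg(-iτ)` stays in `[0, π]` for
`0 ≤ Im τ`, so no branch cut is crossed. -/

section

open Complex ModularForm
open scoped Real

theorem ofReal_tprod {ι 𝕜 : Type*} [RCLike 𝕜] {L : SummationFilter ι} (f : ι → ℝ) :
    ((∏'[L] i, f i : ℝ) : 𝕜) = ∏'[L] i, (f i : 𝕜) :=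
  Function.LeftInverse.map_tprod (g := algebraMap ℝ 𝕜) f RCLike.continuous_ofReal
    RCLike.continuous_re RCLike.ofReal_re

theorem csqrt_mul {z w : ℂ} (h : arg z + arg w ∈ Set.Ioc (-π) π) :
    Complex.sqrt (z * w) = Complex.sqrt z * Complex.sqrt w := by
  rcases eq_or_ne z 0 with rfl | hz
  · simp only [zero_mul, Complex.sqrt_zero]
  rcases eq_or_ne w 0 with rfl | hw
  · simp only [mul_zero, Complex.sqrt_zero]
  rw [sqrt_eq_exp (mul_ne_zero hz hw), sqrt_eq_exp hz, sqrt_eq_exp hw, log_mul hz hw h, add_div,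
    Complex.exp_add]

theorem csqrt_I_mul_csqrt_neg_I_mul {z : ℂ} (hz : 0 ≤ z.im) :
    Complex.sqrt I * Complex.sqrt (-I * z) = Complex.sqrt z := by
  have h_arg : |arg (-I * z)| ≤ π / 2 :=
    abs_arg_le_pi_div_two_iff.mpr (by simpa using hz)
  have h_sum : arg I + arg (-I * z) ∈ Set.Ioc (-π) π := by
    rw [arg_I]
    constructor <;> linarith [abs_le.mp h_arg, Real.pi_pos]
  rw [← csqrt_mul h_sum, ← mul_assoc, mul_neg, I_mul_I, neg_neg, one_mul]

theorem eta_neg_one_div {z : ℂ} (hz : 0 < z.im) :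
    η (-1 / z) = Complex.sqrt (-I * z) * η z := by
  have hI : Complex.sqrt I ≠ 0 := by simp [Complex.sqrt]
  calc η (-1 / z) = (Complex.sqrt I)⁻¹ * (Complex.sqrt z * η z) := eta_comp_eq_csqrt_I_inv hz
    _ = Complex.sqrt (-I * z) * η z := by
      rw [← csqrt_I_mul_csqrt_neg_I_mul hz.le, mul_assoc, inv_mul_cancel_left₀ hI]

theorem eta_ofReal_mul_I (r : ℝ) :
    η (r * I) =
      (Real.exp (-π * r / 12) * ∏' n : ℕ, (1 - Real.exp (-2 * π * r * (n + 1))) : ℝ) := by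
  have h_prefactor : Function.Periodic.qParam 24 (r * I) = (Real.exp (-π * r / 12) : ℝ) := by
    rw [Function.Periodic.qParam, ofReal_exp]
    congr 1
    push_cast
    linear_combination (π * r / 12 : ℂ) * I_sq
  have h_power (n : ℕ) : eta_q n (r * I) = (Real.exp (-2 * π * r * (n + 1)) : ℝ) := by
    rw [eta_q_eq_cexp, ofReal_exp]
    congr 1
    push_cast
    linear_combination (2 * π * r * (n + 1) : ℂ) * I_sq
  have h_tprod : ((∏' n : ℕ, (1 - Real.exp (-2 * π * r * (n + 1))) : ℝ) : ℂ) =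
      ∏' n : ℕ, ((1 - Real.exp (-2 * π * r * (n + 1)) : ℝ) : ℂ) := ofReal_tprod _
  simp only [ModularForm.eta, h_prefactor, h_power, ofReal_mul, h_tprod, ofReal_sub, ofReal_one]

theorem eta_ofReal_inv_mul_I {r : ℝ} (hr : 0 < r) :
    η ((r⁻¹ : ℝ) * I) = Real.sqrt r * η (r * I) := by
  have h_inv : ((r⁻¹ : ℝ) : ℂ) * I = -1 / (r * I) := by
    rw [neg_div, one_div, mul_inv, inv_I, ofReal_inv, mul_neg, neg_neg]
  have h_rot : -I * (r * I) = r := by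
    linear_combination -(r : ℂ) * I_sq
  rw [h_inv, eta_neg_one_div (by simpa using hr), h_rot,
    Complex.sqrt_of_nonneg (zero_le_real.mpr hr.le), ofReal_re]

end

/-- The Dedekind eta functional equation at `τ = ir`: for every `r > 0`,
`e^{−π/(12r)} ∏_{n=1}^∞ (1 − e^{−2πn/r}) = √r · e^{−πr/12} ∏_{n=1}^∞ (1 − e^{−2πrn})`. -/
theorem stmt3 (r : ℝ) (hr : 0 < r) :
    Real.exp (-Real.pi / (12 * r)) * ∏' n : ℕ, (1 - Real.exp (-2 * Real.pi * (n + 1) / r)) =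
      Real.sqrt r * Real.exp (-Real.pi * r / 12) *
        ∏' n : ℕ, (1 - Real.exp (-2 * Real.pi * r * (n + 1))) := by
  have h_prefactor : -Real.pi / (12 * r) = -Real.pi * r⁻¹ / 12 := by ring
  have h_exponent (n : ℕ) : -2 * Real.pi * (n + 1) / r = -2 * Real.pi * r⁻¹ * (n + 1) := by ring
  have h_eta := eta_ofReal_inv_mul_I hr
  rw [eta_ofReal_mul_I, eta_ofReal_mul_I, ← Complex.ofReal_mul, Complex.ofReal_inj] at h_eta
  simp_rw [h_prefactor, h_exponent]
  rw [h_eta, ← mul_assoc]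
end
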